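/- Let -1 < α, β < -1/2, let K, R ∈ {0,1}, k, r ∈ {0,1,2}, W ≥ 1, s ≥ 0 and 1 ≤ p ≤ ∞ be fixed, and define Υ_s(t,θ,φ) := (sin(θ/2)+sin(φ/2))^{Kk} (cos(θ/2)+cos(φ/2))^{Rr} ∫∫_{[-1,1]²} (t² + q(θ,φ,u,v))^{-(α+β+3/2 + W/(2p) + Kk/2 + Rr/2 + s/2)} dπ_α^K(u) dπ_β^R(v) for t ∈ (0,1), θ, φ ∈ [0,π] (with the convention W/(2p) = 0 when p = ∞), where dπ_α^K := dΠ_{-1/2} if K = 0 and dΠ_{α+1} if K = 1, and dπ_β^R := dΠ_{-1/2} if R = 0 and dΠ_{β+1} if R = 1. Then there exists a constant C (depending only on α, β, K, R, k, r, W, s, p) such that for all θ ≠ φ in [0,π]: ‖1 + Υ_s(·,θ,φ)‖_{L^p((0,1), t^{W−1}dt)} ≤ C |θ−φ|^{-s} / μ_{α,β}(B(θ,|θ−φ|)). -/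

import Mathlib

open MeasureTheory Real Set
open scoped ENNReal Classical

noncomputable def cab (α β : ℝ) : ℝ :=
  Real.Gamma (α + β + 2) / (2 ^ (α + β + 1) * Real.Gamma (α + 1) * Real.Gamma (β + 1))

noncomputable def F4 (a₁ a₂ b₁ b₂ x y : ℝ) : ℝ :=
  ∑' p : ℕ × ℕ,
    (Polynomial.eval a₁ (ascPochhammer ℝ (p.1 + p.2)) *
      Polynomial.eval a₂ (ascPochhammer ℝ (p.1 + p.2))) /
    (Polynomial.eval b₁ (ascPochhammer ℝ p.1) * Polynomial.eval b₂ (ascPochhammer ℝ p.2) *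
      (Nat.factorial p.1) * (Nat.factorial p.2)) * x ^ p.1 * y ^ p.2

noncomputable def Hker (α β t θ φ : ℝ) : ℝ :=
  cab α β * Real.sinh (t / 2) / Real.cosh (t / 2) ^ (α + β + 2) *
    F4 ((α + β + 2) / 2) ((α + β + 3) / 2) (α + 1) (β + 1)
      ((Real.sin (θ / 2) * Real.sin (φ / 2) / Real.cosh (t / 2)) ^ 2)
      ((Real.cos (θ / 2) * Real.cos (φ / 2) / Real.cosh (t / 2)) ^ 2)

noncomputable def qf (θ φ u v : ℝ) : ℝ :=
  1 - u * Real.sin (θ / 2) * Real.sin (φ / 2) - v * Real.cos (θ / 2) * Real.cos (φ / 2)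

noncomputable def Psi (α β t θ φ u v : ℝ) : ℝ :=
  cab α β * Real.sinh (t / 2) / (Real.cosh (t / 2) - 1 + qf θ φ u v) ^ (α + β + 2)

noncomputable def PsiE (α β t θ φ u v : ℝ) : ℝ :=
  (Psi α β t θ φ u v + Psi α β t θ φ (-u) v + Psi α β t θ φ u (-v) +
    Psi α β t θ φ (-u) (-v)) / 4

noncomputable def PiMeas (ν : ℝ) : Measure ℝ :=
  if ν = -(1/2) then (2⁻¹ : ℝ≥0∞) • (Measure.dirac (-1) + Measure.dirac 1)
  else (volume.restrict (Icc (-1 : ℝ) 1)).withDensity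
    (fun u => ENNReal.ofReal
      (Real.Gamma (ν + 1) / (Real.sqrt π * Real.Gamma (ν + 1/2)) * (1 - u ^ 2) ^ (ν - 1/2)))

noncomputable def PiFun (γ u : ℝ) : ℝ :=
  Real.Gamma (γ + 1) / (Real.sqrt π * Real.Gamma (γ + 1/2)) *
    ∫ w in (0 : ℝ)..u, (1 - w ^ 2) ^ (γ - 1/2)

noncomputable def PiInt (ν : ℝ) (S : Set ℝ) (f : ℝ → ℝ) : ℝ :=
  if ν = -(1/2) then
    ((if (-1 : ℝ) ∈ S then f (-1) else 0) + (if (1 : ℝ) ∈ S then f 1 else 0)) / 2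
  else ∫ u in S, f u *
    (Real.Gamma (ν + 1) / (Real.sqrt π * Real.Gamma (ν + 1/2)) * (1 - u ^ 2) ^ (ν - 1/2))

noncomputable def muab (α β : ℝ) : Measure ℝ :=
  (volume.restrict (Icc (0 : ℝ) π)).withDensity
    (fun θ => ENNReal.ofReal (Real.sin (θ / 2) ^ (2 * α + 1) * Real.cos (θ / 2) ^ (2 * β + 1)))

def ballI (θ r : ℝ) : Set ℝ := Ioo (θ - r) (θ + r) ∩ Icc 0 π

noncomputable def piAux (α : ℝ) (K : ℕ) : Measure ℝ :=
  if K = 0 then PiMeas (-(1/2)) else PiMeas (α + 1)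

/-!
Write `d = |θ - φ|`, `S = sin (θ/2) + sin (φ/2)` and `T = cos (θ/2) + cos (φ/2)`. The kernel obeys
`d² + S² (1 - u) + T² (1 - v) ≲ q(θ, φ, u, v)`, so integrating a negative power of `t² + q` against
`dΠ_{α+1}(u)` converts a factor `(t² + d²) ^ (-b)` into `S ^ (-2b)` for any `0 ≤ b ≤ α + 3/2`, while
the two-point measure `dΠ_{-1/2}` only allows `b = 0`; likewise for `v` and `T`. The choices
`b = (α + 1/2 + Kk/2)⁺` and `b' = (β + 1/2 + Rr/2)⁺` are admissible and leave an exponent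
`G + W/(2p)` on `t² + d²` with `G > 0`, whose `L^p` norm in `t` is `≲ d ^ (-2G)`.
Since `μ(B(θ, d)) ≲ d S ^ (2α+1) T ^ (2β+1)`, it remains to compare powers of `d`, `S` and `T`,
which is possible because `d ≲ S`, `d ≲ T`, and `S` and `T` are never both small.
-/

section RealPowers

lemma rpow_le_rpow_abs_mul_rpow {x y c : ℝ} (hx : 0 < x) (hy : 0 < y) (hxy : x ≤ c * y)
    (hyx : y ≤ c * x) (e : ℝ) : x ^ e ≤ c ^ |e| * y ^ e := by
  have hc : 0 < c := pos_of_mul_pos_left (hx.trans_le hxy) hy.le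
  rcases le_total 0 e with he | he
  · rw [abs_of_nonneg he, ← Real.mul_rpow hc.le hy.le]
    exact Real.rpow_le_rpow hx.le hxy he
  · calc x ^ e = c ^ |e| * (c * x) ^ e := by
          rw [abs_of_nonpos he, Real.mul_rpow hc.le hx.le, ← mul_assoc, ← Real.rpow_add hc,
            neg_add_cancel, Real.rpow_zero, one_mul]
      _ ≤ c ^ |e| * y ^ e := by
          gcongr ?_ * ?_
          exact Real.rpow_le_rpow_of_nonpos hy hyx he

lemma rpow_mul_rpow_mul_rpow_le {x y z c d S T : ℝ} (hx : 0 ≤ x) (hxy : 0 ≤ x + y) (hd : 0 ≤ d)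
    (hS : 0 < S) (hdS : d ≤ c * S) (hS2 : S ≤ 2) (hT : 1 / 2 ≤ T) (hT2 : T ≤ 2) :
    d ^ x * S ^ y * T ^ z ≤ c ^ x * 2 ^ (x + y) * 2 ^ |z| := by
  have hc : 0 ≤ c := nonneg_of_mul_nonneg_left (hd.trans hdS) hS
  have hTz : T ^ z ≤ 2 ^ |z| := by
    simpa using rpow_le_rpow_abs_mul_rpow (x := T) (c := 2) (by linarith) one_pos
      (by linarith) (by linarith) z
  calc d ^ x * S ^ y * T ^ z ≤ (c * S) ^ x * S ^ y * 2 ^ |z| := by gcongr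
    _ = c ^ x * S ^ (x + y) * 2 ^ |z| := by
        rw [Real.mul_rpow hc hS.le, Real.rpow_add hS]; ring
    _ ≤ c ^ x * 2 ^ (x + y) * 2 ^ |z| := by gcongr

end RealPowers

section PowerIntegrals

lemma lintegral_Ioc_zero_rpow {γ c : ℝ} (hγ : -1 < γ) (hc : 0 ≤ c) :
    ∫⁻ x in Ioc 0 c, ENNReal.ofReal (x ^ γ) = ENNReal.ofReal (c ^ (γ + 1) / (γ + 1)) := by
  have hint : IntegrableOn (fun x : ℝ => x ^ γ) (Ioc 0 c) :=
    (intervalIntegrable_iff_integrableOn_Ioc_of_le hc).1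
      (intervalIntegral.intervalIntegrable_rpow' hγ)
  rw [← ofReal_integral_eq_lintegral_ofReal hint, ← intervalIntegral.integral_of_le hc,
    integral_rpow (Or.inl hγ), Real.zero_rpow (by linarith), sub_zero]
  filter_upwards [ae_restrict_mem measurableSet_Ioc] with x hx
  exact Real.rpow_nonneg hx.1.le _

lemma lintegral_Ioi_rpow {γ c : ℝ} (hγ : γ < -1) (hc : 0 < c) :
    ∫⁻ x in Ioi c, ENNReal.ofReal (x ^ γ) = ENNReal.ofReal (-c ^ (γ + 1) / (γ + 1)) := by
  rw [← ofReal_integral_eq_lintegral_ofReal (integrableOn_Ioi_rpow_of_lt hγ hc),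
    integral_Ioi_rpow_of_lt hγ hc]
  filter_upwards [ae_restrict_mem measurableSet_Ioi] with x hx
  exact Real.rpow_nonneg (hc.le.trans hx.le) _

lemma lintegral_Ioi_max_rpow_mul_rpow {a F c : ℝ} (ha : 0 < a) (haF : a < F) (hc : 0 < c) :
    ∫⁻ w in Ioi (0 : ℝ), ENNReal.ofReal (max c w ^ (-F) * w ^ (a - 1)) =
      ENNReal.ofReal ((1 / a + 1 / (F - a)) * c ^ (a - F)) := by
  have below : ∫⁻ w in Ioc 0 c, ENNReal.ofReal (max c w ^ (-F) * w ^ (a - 1)) =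
      ENNReal.ofReal (c ^ (a - F) / a) := calc
    _ = ∫⁻ w in Ioc 0 c, ENNReal.ofReal (c ^ (-F)) * ENNReal.ofReal (w ^ (a - 1)) := by
        refine setLIntegral_congr_fun measurableSet_Ioc fun w hw => ?_
        rw [max_eq_left hw.2, ENNReal.ofReal_mul (by positivity)]
    _ = ENNReal.ofReal (c ^ (a - F) / a) := by
        rw [lintegral_const_mul' _ _ ENNReal.ofReal_ne_top,
          lintegral_Ioc_zero_rpow (by linarith) hc.le, ← ENNReal.ofReal_mul (by positivity),
          sub_add_cancel, mul_div_assoc', ← Real.rpow_add hc, neg_add_eq_sub]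
  have above : ∫⁻ w in Ioi c, ENNReal.ofReal (max c w ^ (-F) * w ^ (a - 1)) =
      ENNReal.ofReal (c ^ (a - F) / (F - a)) := calc
    _ = ∫⁻ w in Ioi c, ENNReal.ofReal (w ^ (a - F - 1)) := by
        refine setLIntegral_congr_fun measurableSet_Ioi fun w (hw : c < w) => ?_
        rw [max_eq_right hw.le, ← Real.rpow_add (hc.trans hw)]
        congr 2; ring
    _ = ENNReal.ofReal (c ^ (a - F) / (F - a)) := by
        rw [lintegral_Ioi_rpow (by linarith) hc, sub_add_cancel, ← neg_sub F a, neg_div_neg_eq]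
  have : 0 < F - a := sub_pos.2 haF
  rw [← Ioc_union_Ioi_eq_Ioi hc.le,
    lintegral_union measurableSet_Ioi (Ioc_disjoint_Ioi le_rfl), below, above,
    ← ENNReal.ofReal_add (by positivity) (by positivity)]
  congr 1
  ring

lemma lintegral_Ioc_add_mul_rpow_mul_rpow_le {b F γ D X : ℝ} (hb : 0 < b) (hF : b < F)
    (hγ : b - 1 ≤ γ) (hD : 0 < D) (hX : 0 < X) :
    ∫⁻ w in Ioc 0 1, ENNReal.ofReal ((D + X * w) ^ (-F) * w ^ γ) ≤
      ENNReal.ofReal ((1 / b + 1 / (F - b)) * D ^ (b - F) * X ^ (-b)) := by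
  have integrand_le : ∀ w ∈ Ioc (0 : ℝ) 1, (D + X * w) ^ (-F) * w ^ γ ≤
      X ^ (-F) * (max (D / X) w ^ (-F) * w ^ (b - 1)) := by
    intro w ⟨hw, hw1⟩
    have hmax : 0 < max (D / X) w := lt_max_of_lt_right hw
    have mul_max_le : X * max (D / X) w ≤ D + X * w := by
      rw [mul_max_of_nonneg _ _ hX.le, mul_div_cancel₀ _ hX.ne']
      exact max_le_add_of_nonneg hD.le (by positivity)
    rw [← mul_assoc, ← Real.mul_rpow hX.le hmax.le]
    exact mul_le_mul
      (Real.rpow_le_rpow_of_nonpos (by positivity) mul_max_le (by linarith))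
      (Real.rpow_le_rpow_of_exponent_ge hw hw1 hγ) (by positivity) (by positivity)
  calc _ ≤ ∫⁻ w in Ioi 0, ENNReal.ofReal (X ^ (-F)) *
          ENNReal.ofReal (max (D / X) w ^ (-F) * w ^ (b - 1)) := by
        refine (setLIntegral_mono' measurableSet_Ioc fun w hw => ?_).trans
          (lintegral_mono_set fun _ hw => hw.1)
        rw [← ENNReal.ofReal_mul (by positivity)]
        exact ENNReal.ofReal_le_ofReal (integrand_le w hw)
    _ = _ := by
        rw [lintegral_const_mul' _ _ ENNReal.ofReal_ne_top,
          lintegral_Ioi_max_rpow_mul_rpow hb hF (by positivity),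
          ← ENNReal.ofReal_mul (by positivity), Real.div_rpow hD.le hX.le,
          show -F = -b + (b - F) by ring, Real.rpow_add hX]
        congr 1
        field_simp

lemma exists_setLIntegral_Ioo_rpow_le {γ : ℝ} (hγ : -1 < γ) :
    ∃ C : ℝ, 0 < C ∧ ∀ θ d : ℝ, 0 ≤ θ → 0 < d →
      ∫⁻ x in Ioo (θ - d) (θ + d) ∩ Ioi 0, ENNReal.ofReal (x ^ γ) ≤
        ENNReal.ofReal (C * d * (θ + d) ^ γ) := by
  have hγ' : 0 < γ + 1 := by linarith
  refine ⟨max (3 / (γ + 1)) (2 * 3 ^ |γ|), by positivity, fun θ d hθ hd => ?_⟩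
  have hθd : 0 < θ + d := by positivity
  rcases lt_or_ge θ (2 * d) with near_zero | away_from_zero
  · calc _ ≤ ∫⁻ x in Ioc 0 (θ + d), ENNReal.ofReal (x ^ γ) :=
          lintegral_mono_set fun x hx => ⟨hx.2, hx.1.2.le⟩
      _ = ENNReal.ofReal ((θ + d) ^ γ * (θ + d) / (γ + 1)) := by
          rw [lintegral_Ioc_zero_rpow hγ hθd.le, Real.rpow_add_one hθd.ne']
      _ ≤ ENNReal.ofReal ((θ + d) ^ γ * (3 * d) / (γ + 1)) := by gcongr; linarith
      _ = ENNReal.ofReal (3 / (γ + 1) * d * (θ + d) ^ γ) := by congr 1; ring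
      _ ≤ _ := by gcongr; exact le_max_left _ _
  · calc _ ≤ ∫⁻ x in Ioo (θ - d) (θ + d), ENNReal.ofReal (3 ^ |γ| * (θ + d) ^ γ) := by
          refine (lintegral_mono_set inter_subset_left).trans
            (setLIntegral_mono' (measurableSet_Ioo (α := ℝ)) fun x hx =>
              ENNReal.ofReal_le_ofReal (rpow_le_rpow_abs_mul_rpow ?_ hθd ?_ ?_ γ)) <;>
            linarith [hx.1, hx.2]
      _ = ENNReal.ofReal (2 * 3 ^ |γ| * d * (θ + d) ^ γ) := by
          rw [setLIntegral_const, Real.volume_Ioo, ← ENNReal.ofReal_mul (by positivity)]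
          congr 1; ring
      _ ≤ _ := by gcongr; exact le_max_right _ _

lemma setLIntegral_preimage_sub_left (c : ℝ) (f : ℝ → ℝ≥0∞) (s : Set ℝ) :
    ∫⁻ x in (fun x => c - x) ⁻¹' s, f (c - x) = ∫⁻ x in s, f x :=
  (Measure.measurePreserving_sub_left volume c).setLIntegral_comp_preimage_emb
    (Homeomorph.subLeft c).measurableEmbedding f s

lemma setLIntegral_preimage_add_left (c : ℝ) (f : ℝ → ℝ≥0∞) (s : Set ℝ) :
    ∫⁻ x in (fun x => c + x) ⁻¹' s, f (c + x) = ∫⁻ x in s, f x :=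
  (measurePreserving_add_left volume c).setLIntegral_comp_preimage_emb
    (Homeomorph.addLeft c).measurableEmbedding f s

end PowerIntegrals

/-- A measure `ρ` on `[-1, 1]` has edge gain `b ≥ 0` if, for every `F > b`, integrating
`u ↦ (D + X (1 - u)) ^ (-F)` against `ρ` lowers the singularity `D ^ (-F)` at the edge `u = 1` to
`D ^ (b - F)`, at the price of a factor `X ^ (-b)` and uniformly in `D, X > 0`. -/
structure HasEdgeGain (ρ : Measure ℝ) (b : ℝ) : Prop where
  ae_mem_Icc : ∀ᵐ u ∂ρ, u ∈ Icc (-1 : ℝ) 1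
  nonneg : 0 ≤ b
  exists_lintegral_le : ∀ F, b < F → ∃ C : ℝ, 0 < C ∧ ∀ D X : ℝ, 0 < D → 0 < X →
    ∫⁻ u, ENNReal.ofReal ((D + X * (1 - u)) ^ (-F)) ∂ρ ≤
      ENNReal.ofReal (C * D ^ (b - F) * X ^ (-b))

namespace HasEdgeGain

lemma zero {ρ : Measure ℝ} [IsFiniteMeasure ρ] (hρ : ∀ᵐ u ∂ρ, u ∈ Icc (-1 : ℝ) 1) :
    HasEdgeGain ρ 0 where
  ae_mem_Icc := hρ
  nonneg := le_rfl
  exists_lintegral_le F hF := by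
    refine ⟨(ρ univ).toReal + 1, by positivity, fun D X hD hX => ?_⟩
    calc _ ≤ ∫⁻ _, ENNReal.ofReal (D ^ (-F)) ∂ρ := by
          refine lintegral_mono_ae (hρ.mono fun u hu => ENNReal.ofReal_le_ofReal ?_)
          refine Real.rpow_le_rpow_of_nonpos hD ?_ (by linarith)
          linarith [mul_nonneg hX.le (sub_nonneg.2 hu.2)]
      _ = ENNReal.ofReal (D ^ (-F) * (ρ univ).toReal) := by
          rw [lintegral_const, ENNReal.ofReal_mul (by positivity),
            ENNReal.ofReal_toReal (measure_ne_top ρ univ)]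
      _ ≤ _ := by
          rw [neg_zero, Real.rpow_zero, zero_sub, mul_one, mul_comm]
          gcongr
          linarith

lemma exists_lintegral_lintegral_le {ρ σ : Measure ℝ} {b b' F : ℝ} (hρ : HasEdgeGain ρ b)
    (hσ : HasEdgeGain σ b') (hF : b + b' < F) :
    ∃ C : ℝ, 0 < C ∧ ∀ D X Y : ℝ, 0 < D → 0 < X → 0 < Y →
      ∫⁻ v, ∫⁻ u, ENNReal.ofReal ((D + Y * (1 - v) + X * (1 - u)) ^ (-F)) ∂ρ ∂σ ≤
        ENNReal.ofReal (C * X ^ (-b) * Y ^ (-b') * D ^ (-(F - b - b'))) := by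
  obtain ⟨C₁, hC₁, hu⟩ := hρ.exists_lintegral_le F (by linarith [hσ.nonneg])
  obtain ⟨C₂, hC₂, hv⟩ := hσ.exists_lintegral_le (F - b) (by linarith)
  refine ⟨C₁ * C₂, by positivity, fun D X Y hD hX hY => ?_⟩
  calc _ ≤ ∫⁻ v, ENNReal.ofReal (C₁ * X ^ (-b)) *
          ENNReal.ofReal ((D + Y * (1 - v)) ^ (-(F - b))) ∂σ := by
        refine lintegral_mono_ae (hσ.ae_mem_Icc.mono fun v hv => ?_)
        have : 0 ≤ 1 - v := sub_nonneg.2 hv.2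
        rw [← ENNReal.ofReal_mul (by positivity), neg_sub, mul_right_comm]
        exact hu _ _ (by positivity) hX
    _ ≤ ENNReal.ofReal (C₁ * X ^ (-b)) *
          ENNReal.ofReal (C₂ * D ^ (b' - (F - b)) * Y ^ (-b')) := by
        rw [lintegral_const_mul' _ _ ENNReal.ofReal_ne_top]
        gcongr
        exact hv D Y hD hY
    _ = _ := by
        rw [← ENNReal.ofReal_mul (by positivity), ← neg_sub (F - b) b']
        congr 1; ring

end HasEdgeGain

section PiMeas

lemma ae_PiMeas_mem_Icc (ν : ℝ) : ∀ᵐ u ∂(PiMeas ν), u ∈ Icc (-1 : ℝ) 1 := by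
  unfold PiMeas
  split_ifs
  · refine Measure.ae_smul_measure (ae_add_measure_iff.2 ⟨?_, ?_⟩) _ <;> simp [ae_dirac_eq]
  · exact (withDensity_absolutelyContinuous _ _).ae_le (ae_restrict_mem measurableSet_Icc)

lemma setLIntegral_Ioo_neg_one_one_le {g h : ℝ → ℝ≥0∞}
    (hgh : ∀ u w, 0 < w → w ≤ 1 → u = 1 - w ∨ u = w - 1 → h u ≤ g w) :
    ∫⁻ u in Ioo (-1) 1, h u ≤ 2 * ∫⁻ w in Ioc 0 1, g w := by
  have right_measurable : MeasurableSet ((fun u : ℝ => 1 - u) ⁻¹' Ioc 0 1) :=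
    measurableSet_Ioc.preimage (by fun_prop)
  have left_measurable : MeasurableSet ((fun u : ℝ => 1 + u) ⁻¹' Ioc 0 1) :=
    measurableSet_Ioc.preimage (by fun_prop)
  calc ∫⁻ u in Ioo (-1) 1, h u
      ≤ ∫⁻ u in ((fun u => 1 - u) ⁻¹' Ioc 0 1) ∪ ((fun u => 1 + u) ⁻¹' Ioc 0 1), h u := by
        refine lintegral_mono_set fun u hu => ?_
        rcases le_total 0 u with h | h
        · exact Or.inl ⟨by linarith [hu.2], by linarith⟩
        · exact Or.inr ⟨by linarith [hu.1], by linarith⟩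
    _ ≤ _ := lintegral_union_le _ _ _
    _ ≤ (∫⁻ u in (fun u => 1 - u) ⁻¹' Ioc 0 1, g (1 - u)) +
          ∫⁻ u in (fun u => 1 + u) ⁻¹' Ioc 0 1, g (1 + u) :=
        add_le_add
          (setLIntegral_mono' right_measurable fun u hu =>
            hgh u (1 - u) hu.1 hu.2 (Or.inl (by ring)))
          (setLIntegral_mono' left_measurable fun u hu =>
            hgh u (1 + u) hu.1 hu.2 (Or.inr (by ring)))
    _ = 2 * ∫⁻ w in Ioc 0 1, g w := by
        rw [setLIntegral_preimage_sub_left 1 g, setLIntegral_preimage_add_left 1 g, two_mul]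

lemma exists_lintegral_PiMeas_antitone_le {ν : ℝ} (hν : -(1 / 2) < ν) :
    ∃ C : ℝ, 0 < C ∧ ∀ f : ℝ → ℝ, AntitoneOn f (Ici 0) → (∀ x ∈ Ici 0, 0 ≤ f x) →
      ∫⁻ u, ENNReal.ofReal (f (1 - u)) ∂(PiMeas ν) ≤
        ENNReal.ofReal C * ∫⁻ w in Ioc 0 1, ENNReal.ofReal (f w * w ^ (ν - 1 / 2)) := by
  set c : ℝ := Real.Gamma (ν + 1) / (√π * Real.Gamma (ν + 1 / 2))
  have hc : 0 < c := by
    have := Real.Gamma_pos_of_pos (by linarith : 0 < ν + 1)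
    have := Real.Gamma_pos_of_pos (by linarith : 0 < ν + 1 / 2)
    positivity
  set c' : ℝ := c * 2 ^ |ν - 1 / 2|
  have : 0 < c' := by positivity
  refine ⟨2 * c', by positivity, fun f hf hf0 => ?_⟩
  have density_mul_le : ∀ u w : ℝ, 0 < w → w ≤ 1 → u = 1 - w ∨ u = w - 1 →
      ENNReal.ofReal (c * (1 - u ^ 2) ^ (ν - 1 / 2)) * ENNReal.ofReal (f (1 - u)) ≤
        ENNReal.ofReal c' * ENNReal.ofReal (f w * w ^ (ν - 1 / 2)) := by
    intro u w hw hw1 huw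
    have sq_eq : 1 - u ^ 2 = w * (2 - w) := by rcases huw with rfl | rfl <;> ring
    have le_one_sub : w ≤ 1 - u := by rcases huw with rfl | rfl <;> linarith
    have h0 : 0 < 1 - u ^ 2 := by rw [sq_eq]; exact mul_pos hw (by linarith)
    have density_le : (1 - u ^ 2) ^ (ν - 1 / 2) ≤ 2 ^ |ν - 1 / 2| * w ^ (ν - 1 / 2) :=
      rpow_le_rpow_abs_mul_rpow h0 hw (by nlinarith) (by nlinarith) _
    have f_le : f (1 - u) ≤ f w := hf hw.le (hw.le.trans le_one_sub) le_one_sub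
    have f_nonneg : 0 ≤ f (1 - u) := hf0 _ (hw.le.trans le_one_sub)
    rw [← ENNReal.ofReal_mul (by positivity), ← ENNReal.ofReal_mul (by positivity)]
    apply ENNReal.ofReal_le_ofReal
    calc c * (1 - u ^ 2) ^ (ν - 1 / 2) * f (1 - u)
        ≤ c * (2 ^ |ν - 1 / 2| * w ^ (ν - 1 / 2)) * f w := by gcongr
      _ = c' * (f w * w ^ (ν - 1 / 2)) := by ring
  rw [PiMeas, if_neg hν.ne', ← Measure.restrict_congr_set Ioo_ae_eq_Icc]
  calc _ ≤ _ := lintegral_withDensity_le_lintegral_mul _ (by fun_prop) _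
    _ ≤ _ := setLIntegral_Ioo_neg_one_one_le density_mul_le
    _ = _ := by
        rw [lintegral_const_mul' _ _ ENNReal.ofReal_ne_top, ← mul_assoc,
          ENNReal.ofReal_mul zero_le_two, ENNReal.ofReal_ofNat]

lemma isFiniteMeasure_PiMeas {ν : ℝ} (hν : -(1 / 2) ≤ ν) : IsFiniteMeasure (PiMeas ν) := by
  rcases hν.eq_or_lt with rfl | hν
  · constructor
    simp [PiMeas]
  · obtain ⟨C, -, hC⟩ := exists_lintegral_PiMeas_antitone_le hν
    have mass_le := hC (fun _ => 1) antitoneOn_const (by simp)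
    simp only [one_mul, ENNReal.ofReal_one, lintegral_const,
      lintegral_Ioc_zero_rpow (by linarith : -1 < ν - 1 / 2) zero_le_one] at mass_le
    exact ⟨mass_le.trans_lt (ENNReal.mul_lt_top ENNReal.ofReal_lt_top ENNReal.ofReal_lt_top)⟩

lemma hasEdgeGain_PiMeas_of_pos {ν b : ℝ} (hν : -(1 / 2) < ν) (hb : 0 < b) (hbν : b ≤ ν + 1 / 2) :
    HasEdgeGain (PiMeas ν) b where
  ae_mem_Icc := ae_PiMeas_mem_Icc ν
  nonneg := hb.le
  exists_lintegral_le F hF := by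
    obtain ⟨C, hC, hCf⟩ := exists_lintegral_PiMeas_antitone_le hν
    have : 0 < F - b := sub_pos.2 hF
    refine ⟨C * (1 / b + 1 / (F - b)), by positivity, fun D X hD hX => ?_⟩
    have antitone : AntitoneOn (fun w => (D + X * w) ^ (-F)) (Ici 0) := by
      intro x (hx : 0 ≤ x) y _ hxy
      exact Real.rpow_le_rpow_of_nonpos (by positivity) (by gcongr) (by linarith)
    have nonneg : ∀ w ∈ Ici 0, 0 ≤ (D + X * w) ^ (-F) := by
      intro w (hw : 0 ≤ w)
      positivity
    calc _ ≤ ENNReal.ofReal C * ∫⁻ w in Ioc 0 1,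
            ENNReal.ofReal ((D + X * w) ^ (-F) * w ^ (ν - 1 / 2)) := hCf _ antitone nonneg
      _ ≤ ENNReal.ofReal C *
            ENNReal.ofReal ((1 / b + 1 / (F - b)) * D ^ (b - F) * X ^ (-b)) := by
          gcongr
          exact lintegral_Ioc_add_mul_rpow_mul_rpow_le hb hF (by linarith) hD hX
      _ = _ := by
          rw [← ENNReal.ofReal_mul hC.le]
          congr 1
          ring

lemma hasEdgeGain_PiMeas {ν b : ℝ} (hν : -(1 / 2) ≤ ν) (hb : 0 ≤ b) (hbν : b ≤ ν + 1 / 2) :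
    HasEdgeGain (PiMeas ν) b := by
  rcases hb.eq_or_lt with rfl | hb
  · have := isFiniteMeasure_PiMeas hν
    exact .zero (ae_PiMeas_mem_Icc ν)
  · exact hasEdgeGain_PiMeas_of_pos (by linarith) hb hbν

lemma hasEdgeGain_piAux {α : ℝ} (hα : -1 < α) {K k : ℕ} (hK : K = 0 → α ≤ -(1 / 2))
    (hk : K * k ≤ 2) : HasEdgeGain (piAux α K) (α + 1 / 2 + (K * k : ℕ) / 2)⁺ := by
  unfold piAux
  split_ifs with h
  · have gain_eq_zero : (α + 1 / 2 + (K * k : ℕ) / 2)⁺ = 0 := by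
      rw [posPart_eq_zero, h, zero_mul, Nat.cast_zero]
      linarith [hK h]
    rw [gain_eq_zero]
    exact hasEdgeGain_PiMeas le_rfl le_rfl (by norm_num)
  · have : ((K * k : ℕ) : ℝ) ≤ 2 := by exact_mod_cast hk
    exact hasEdgeGain_PiMeas (by linarith) (posPart_nonneg _)
      (sup_le (by linarith) (by linarith))

end PiMeas

section HalfAngles

lemma sin_half_pi_sub (x : ℝ) : sin ((π - x) / 2) = cos (x / 2) := by
  rw [sub_div, sin_pi_div_two_sub]

lemma cos_half_pi_sub (x : ℝ) : cos ((π - x) / 2) = sin (x / 2) := by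
  rw [sub_div, cos_pi_div_two_sub]

lemma pi_sub_mem_Icc {x : ℝ} (hx : x ∈ Icc 0 π) : π - x ∈ Icc 0 π :=
  ⟨sub_nonneg.2 hx.2, sub_le_self π hx.1⟩

lemma le_pi_mul_sin_half {x : ℝ} (hx : x ∈ Icc 0 π) : x ≤ π * sin (x / 2) := by
  have jordan : 2 / π * (x / 2) ≤ sin (x / 2) :=
    mul_le_sin (by linarith [hx.1]) (by linarith [hx.2])
  rwa [show 2 / π * (x / 2) = x / π by ring, div_le_iff₀' pi_pos] at jordan

lemma sin_half_nonneg {x : ℝ} (hx : x ∈ Icc 0 π) : 0 ≤ sin (x / 2) :=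
  sin_nonneg_of_nonneg_of_le_pi (by linarith [hx.1]) (by linarith [hx.1, hx.2])

lemma cos_half_nonneg {x : ℝ} (hx : x ∈ Icc 0 π) : 0 ≤ cos (x / 2) := by
  rw [← sin_half_pi_sub]
  exact sin_half_nonneg (pi_sub_mem_Icc hx)

lemma sin_half_pos {x : ℝ} (hx : x ∈ Ioo 0 π) : 0 < sin (x / 2) :=
  sin_pos_of_pos_of_lt_pi (by linarith [hx.1]) (by linarith [hx.1, hx.2])

lemma cos_half_pos {x : ℝ} (hx : x ∈ Ioo 0 π) : 0 < cos (x / 2) := by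
  rw [← sin_half_pi_sub]
  exact sin_half_pos ⟨sub_pos.2 hx.2, sub_lt_self π hx.1⟩

/-- The factor `sin (θ/2) + sin (φ/2)`, comparable with the distance from `0` to the farther of
`θ` and `φ`. -/
noncomputable def sinSum (θ φ : ℝ) : ℝ := sin (θ / 2) + sin (φ / 2)

/-- The factor `cos (θ/2) + cos (φ/2)`, the mirror image of `sinSum` under `x ↦ π - x`. -/
noncomputable def cosSum (θ φ : ℝ) : ℝ := cos (θ / 2) + cos (φ / 2)

lemma sinSum_pi_sub (θ φ : ℝ) : sinSum (π - θ) (π - φ) = cosSum θ φ := by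
  simp only [sinSum, cosSum, sin_half_pi_sub]

lemma cosSum_pi_sub (θ φ : ℝ) : cosSum (π - θ) (π - φ) = sinSum θ φ := by
  rw [← sinSum_pi_sub, sub_sub_cancel, sub_sub_cancel]

lemma abs_pi_sub_sub_pi_sub (θ φ : ℝ) : |(π - θ) - (π - φ)| = |θ - φ| := by
  rw [sub_sub_sub_cancel_left, abs_sub_comm]

lemma sinSum_le_two (θ φ : ℝ) : sinSum θ φ ≤ 2 := by
  unfold sinSum
  linarith [sin_le_one (θ / 2), sin_le_one (φ / 2)]

lemma cosSum_le_two (θ φ : ℝ) : cosSum θ φ ≤ 2 := by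
  rw [← sinSum_pi_sub]
  exact sinSum_le_two _ _

lemma add_le_pi_mul_sinSum {θ φ : ℝ} (hθ : θ ∈ Icc 0 π) (hφ : φ ∈ Icc 0 π) :
    θ + φ ≤ π * sinSum θ φ := by
  rw [sinSum, mul_add]
  exact add_le_add (le_pi_mul_sin_half hθ) (le_pi_mul_sin_half hφ)

lemma abs_sub_le_pi_mul_sinSum {θ φ : ℝ} (hθ : θ ∈ Icc 0 π) (hφ : φ ∈ Icc 0 π) :
    |θ - φ| ≤ π * sinSum θ φ :=
  (abs_le.2 ⟨by linarith [hθ.1], by linarith [hφ.1]⟩ : |θ - φ| ≤ θ + φ).trans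
    (add_le_pi_mul_sinSum hθ hφ)

lemma abs_sub_le_pi_mul_cosSum {θ φ : ℝ} (hθ : θ ∈ Icc 0 π) (hφ : φ ∈ Icc 0 π) :
    |θ - φ| ≤ π * cosSum θ φ := by
  rw [← sinSum_pi_sub, ← abs_pi_sub_sub_pi_sub]
  exact abs_sub_le_pi_mul_sinSum (pi_sub_mem_Icc hθ) (pi_sub_mem_Icc hφ)

lemma sinSum_pos {θ φ : ℝ} (hθ : θ ∈ Icc 0 π) (hφ : φ ∈ Icc 0 π) (hne : θ ≠ φ) :
    0 < sinSum θ φ :=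
  pos_of_mul_pos_right ((abs_pos.2 (sub_ne_zero.2 hne)).trans_le
    (abs_sub_le_pi_mul_sinSum hθ hφ)) pi_pos.le

lemma cosSum_pos {θ φ : ℝ} (hθ : θ ∈ Icc 0 π) (hφ : φ ∈ Icc 0 π) (hne : θ ≠ φ) :
    0 < cosSum θ φ :=
  pos_of_mul_pos_right ((abs_pos.2 (sub_ne_zero.2 hne)).trans_le
    (abs_sub_le_pi_mul_cosSum hθ hφ)) pi_pos.le

lemma sinSum_le_add_abs_sub {θ φ : ℝ} (hθ : θ ∈ Icc 0 π) (hφ : φ ∈ Icc 0 π) :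
    sinSum θ φ ≤ θ + |θ - φ| := by
  have sin_le_θ := sin_le (x := θ / 2) (by linarith [hθ.1])
  have sin_le_φ := sin_le (x := φ / 2) (by linarith [hφ.1])
  unfold sinSum
  linarith [neg_abs_le (θ - φ), hθ.1, abs_nonneg (θ - φ)]

lemma add_abs_sub_le_two_pi_mul_sinSum {θ φ : ℝ} (hθ : θ ∈ Icc 0 π) (hφ : φ ∈ Icc 0 π) :
    θ + |θ - φ| ≤ 2 * π * sinSum θ φ := by
  linarith [add_le_pi_mul_sinSum hθ hφ, abs_sub_le_pi_mul_sinSum hθ hφ, hφ.1]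

lemma half_le_sinSum_or_half_le_cosSum {θ φ : ℝ} (hθ : θ ∈ Icc 0 π) (hφ : φ ∈ Icc 0 π) :
    1 / 2 ≤ sinSum θ φ ∨ 1 / 2 ≤ cosSum θ φ := by
  have := sin_half_nonneg hφ
  have := cos_half_nonneg hφ
  by_contra! h
  unfold sinSum cosSum at h
  nlinarith [sin_sq_add_cos_sq (θ / 2), sin_half_nonneg hθ, cos_half_nonneg hθ]

end HalfAngles

section Qf

lemma qf_eq (θ φ u v : ℝ) :
    qf θ φ u v = ((sin (θ / 2) - sin (φ / 2)) ^ 2 / 2 + (1 - u) * (sin (θ / 2) * sin (φ / 2))) +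
      ((cos (θ / 2) - cos (φ / 2)) ^ 2 / 2 + (1 - v) * (cos (θ / 2) * cos (φ / 2))) := by
  unfold qf
  linear_combination (-1 / 2) * sin_sq_add_cos_sq (θ / 2) + (-1 / 2) * sin_sq_add_cos_sq (φ / 2)

lemma add_sq_mul_one_sub_div_four_le {a b u : ℝ} (hu : -1 ≤ u) :
    (a + b) ^ 2 * (1 - u) / 4 ≤ (a - b) ^ 2 / 2 + (1 - u) * (a * b) := by
  nlinarith [mul_nonneg (neg_le_iff_add_nonneg'.1 hu) (sq_nonneg (a - b))]

lemma sq_div_le_one_sub_cos_half_sub {θ φ : ℝ} (hθ : θ ∈ Icc 0 π) (hφ : φ ∈ Icc 0 π) :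
    |θ - φ| ^ 2 / 32 ≤ 1 - cos ((θ - φ) / 2) := by
  have cos_le : cos ((θ - φ) / 2) ≤ 1 - 2 / π ^ 2 * ((θ - φ) / 2) ^ 2 := by
    refine cos_le_one_sub_mul_cos_sq (abs_le.2 ⟨?_, ?_⟩) <;>
      linarith [hθ.1, hθ.2, hφ.1, hφ.2, pi_pos]
  have : π ^ 2 ≤ 16 := by nlinarith [pi_pos, pi_le_four]
  calc |θ - φ| ^ 2 / 32 ≤ |θ - φ| ^ 2 / (2 * π ^ 2) := by gcongr; linarith
    _ = 2 / π ^ 2 * ((θ - φ) / 2) ^ 2 := by rw [sq_abs]; field_simp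
    _ ≤ 1 - cos ((θ - φ) / 2) := by linarith

lemma sq_div_le_qf {θ φ u v : ℝ} (hθ : θ ∈ Icc 0 π) (hφ : φ ∈ Icc 0 π) (hu : u ≤ 1)
    (hv : v ≤ 1) : |θ - φ| ^ 2 / 32 ≤ qf θ φ u v := by
  have sin_mul_sin_nonneg := mul_nonneg (sin_half_nonneg hθ) (sin_half_nonneg hφ)
  have cos_mul_cos_nonneg := mul_nonneg (cos_half_nonneg hθ) (cos_half_nonneg hφ)
  have key := sq_div_le_one_sub_cos_half_sub hθ hφ
  rw [sub_div, cos_sub] at key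
  unfold qf
  nlinarith [mul_nonneg (sub_nonneg.2 hu) sin_mul_sin_nonneg,
    mul_nonneg (sub_nonneg.2 hv) cos_mul_cos_nonneg]

lemma qf_lower_bound {θ φ u v : ℝ} (hθ : θ ∈ Icc 0 π) (hφ : φ ∈ Icc 0 π)
    (hu : u ∈ Icc (-1 : ℝ) 1) (hv : v ∈ Icc (-1 : ℝ) 1) :
    1 / 64 * (|θ - φ| ^ 2 + cosSum θ φ ^ 2 * (1 - v) + sinSum θ φ ^ 2 * (1 - u)) ≤
      qf θ φ u v := by
  have sq_le := sq_div_le_qf hθ hφ hu.2 hv.2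
  have sin_le := add_sq_mul_one_sub_div_four_le (a := sin (θ / 2)) (b := sin (φ / 2)) hu.1
  have cos_le := add_sq_mul_one_sub_div_four_le (a := cos (θ / 2)) (b := cos (φ / 2)) hv.1
  have sin_nonneg := mul_nonneg (sq_nonneg (sinSum θ φ)) (sub_nonneg.2 hu.2)
  have cos_nonneg := mul_nonneg (sq_nonneg (cosSum θ φ)) (sub_nonneg.2 hv.2)
  rw [qf_eq] at sq_le ⊢
  unfold sinSum cosSum at *
  linarith

lemma qf_le_two {θ φ u v : ℝ} (hθ : θ ∈ Icc 0 π) (hφ : φ ∈ Icc 0 π) (hu : -1 ≤ u)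
    (hv : -1 ≤ v) : qf θ φ u v ≤ 2 := by
  have sin_mul_sin_nonneg := mul_nonneg (sin_half_nonneg hθ) (sin_half_nonneg hφ)
  have cos_mul_cos_nonneg := mul_nonneg (cos_half_nonneg hθ) (cos_half_nonneg hφ)
  have cos_sub_le_one := cos_le_one (θ / 2 - φ / 2)
  rw [cos_sub] at cos_sub_le_one
  unfold qf
  nlinarith [mul_nonneg (neg_le_iff_add_nonneg'.1 hu) sin_mul_sin_nonneg,
    mul_nonneg (neg_le_iff_add_nonneg'.1 hv) cos_mul_cos_nonneg]

end Qf

section Kernel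

lemma add_qf_rpow_neg_le {θ φ u v t E F : ℝ} (hθ : θ ∈ Icc 0 π) (hφ : φ ∈ Icc 0 π)
    (hne : θ ≠ φ) (hu : u ∈ Icc (-1 : ℝ) 1) (hv : v ∈ Icc (-1 : ℝ) 1) (ht : t ^ 2 ≤ 1)
    (hEF : E ≤ F) (hF : 0 ≤ F) :
    (t ^ 2 + qf θ φ u v) ^ (-E) ≤ 3 ^ (F - E) * (1 / 64) ^ (-F) *
      (t ^ 2 + |θ - φ| ^ 2 + cosSum θ φ ^ 2 * (1 - v) + sinSum θ φ ^ 2 * (1 - u)) ^ (-F) := by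
  set D := t ^ 2 + |θ - φ| ^ 2 + cosSum θ φ ^ 2 * (1 - v) + sinSum θ φ ^ 2 * (1 - u)
  have hD : 0 < D := by
    have : 0 < |θ - φ| := abs_pos.2 (sub_ne_zero.2 hne)
    have : 0 ≤ 1 - u := sub_nonneg.2 hu.2
    have : 0 ≤ 1 - v := sub_nonneg.2 hv.2
    positivity
  have le_add_qf : 1 / 64 * D ≤ t ^ 2 + qf θ φ u v := by
    linarith [qf_lower_bound hθ hφ hu hv, sq_nonneg t]
  have add_qf_pos : 0 < t ^ 2 + qf θ φ u v := by linarith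
  have add_qf_le : t ^ 2 + qf θ φ u v ≤ 3 := by linarith [qf_le_two hθ hφ hu.1 hv.1]
  calc (t ^ 2 + qf θ φ u v) ^ (-E)
      = (t ^ 2 + qf θ φ u v) ^ (F - E) * (t ^ 2 + qf θ φ u v) ^ (-F) := by
        rw [← Real.rpow_add add_qf_pos, show F - E + -F = -E by ring]
    _ ≤ 3 ^ (F - E) * (1 / 64 * D) ^ (-F) :=
        mul_le_mul (Real.rpow_le_rpow add_qf_pos.le add_qf_le (sub_nonneg.2 hEF))
          (Real.rpow_le_rpow_of_nonpos (by positivity) le_add_qf (neg_nonpos.2 hF))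
          (by positivity) (by positivity)
    _ = 3 ^ (F - E) * (1 / 64) ^ (-F) * D ^ (-F) := by
        rw [Real.mul_rpow (by norm_num) hD.le, mul_assoc]

lemma sq_rpow {x : ℝ} (hx : 0 ≤ x) (y : ℝ) : (x ^ 2) ^ y = x ^ (2 * y) :=
  (Real.rpow_natCast_mul hx 2 y).symm

lemma exists_norm_integral_qf_le {ρ σ : Measure ℝ} {b b' E F : ℝ} (hρ : HasEdgeGain ρ b)
    (hσ : HasEdgeGain σ b') (hEF : E ≤ F) (hF : b + b' < F) :
    ∃ C : ℝ, 0 < C ∧ ∀ θ ∈ Icc 0 π, ∀ φ ∈ Icc 0 π, θ ≠ φ → ∀ t : ℝ, t ^ 2 ≤ 1 →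
      ‖∫ v, ∫ u, (t ^ 2 + qf θ φ u v) ^ (-E) ∂ρ ∂σ‖ ≤
        C * sinSum θ φ ^ (-(2 * b)) * cosSum θ φ ^ (-(2 * b')) *
          (t ^ 2 + |θ - φ| ^ 2) ^ (-(F - b - b')) := by
  have hF0 : 0 ≤ F := by linarith [hρ.nonneg, hσ.nonneg]
  obtain ⟨C, hC, hint⟩ := hρ.exists_lintegral_lintegral_le hσ hF
  set M : ℝ := 3 ^ (F - E) * (1 / 64) ^ (-F)
  have hM : 0 < M := by positivity
  refine ⟨M * C, by positivity, fun θ hθ φ hφ hne t ht => ?_⟩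
  have hS := sinSum_pos hθ hφ hne
  have hT := cosSum_pos hθ hφ hne
  have : 0 < |θ - φ| := abs_pos.2 (sub_ne_zero.2 hne)
  rw [← ENNReal.ofReal_le_ofReal_iff (by positivity), ofReal_norm]
  calc _ ≤ ∫⁻ v, ∫⁻ u, ‖(t ^ 2 + qf θ φ u v) ^ (-E)‖ₑ ∂ρ ∂σ :=
        (enorm_integral_le_lintegral_enorm _).trans
          (lintegral_mono fun v => enorm_integral_le_lintegral_enorm _)
    _ ≤ ∫⁻ v, ∫⁻ u, ENNReal.ofReal M * ENNReal.ofReal ((t ^ 2 + |θ - φ| ^ 2 +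
          cosSum θ φ ^ 2 * (1 - v) + sinSum θ φ ^ 2 * (1 - u)) ^ (-F)) ∂ρ ∂σ := by
        refine lintegral_mono_ae (hσ.ae_mem_Icc.mono fun v hv =>
          lintegral_mono_ae (hρ.ae_mem_Icc.mono fun u hu => ?_))
        have qf_nonneg : 0 ≤ qf θ φ u v := le_trans (by positivity) (sq_div_le_qf hθ hφ hu.2 hv.2)
        rw [Real.enorm_of_nonneg (by positivity), ← ENNReal.ofReal_mul hM.le]
        exact ENNReal.ofReal_le_ofReal (add_qf_rpow_neg_le hθ hφ hne hu hv ht hEF hF0)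
    _ ≤ ENNReal.ofReal M * ENNReal.ofReal (C * (sinSum θ φ ^ 2) ^ (-b) *
          (cosSum θ φ ^ 2) ^ (-b') * (t ^ 2 + |θ - φ| ^ 2) ^ (-(F - b - b'))) := by
        simp only [lintegral_const_mul' _ _ ENNReal.ofReal_ne_top]
        gcongr
        exact hint _ _ _ (by positivity) (by positivity) (by positivity)
    _ = _ := by
        rw [← ENNReal.ofReal_mul hM.le, sq_rpow hS.le, sq_rpow hT.le, mul_neg, mul_neg]
        congr 1
        ring

end Kernel

section Ball

lemma measurableSet_ballI (θ r : ℝ) : MeasurableSet (ballI θ r) :=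
  measurableSet_Ioo.inter measurableSet_Icc

lemma muab_ballI_eq (α β θ r : ℝ) :
    muab α β (ballI θ r) = ∫⁻ x in Ioo (θ - r) (θ + r) ∩ Ioo 0 π,
      ENNReal.ofReal (sin (x / 2) ^ (2 * α + 1) * cos (x / 2) ^ (2 * β + 1)) := by
  rw [muab, withDensity_apply _ (measurableSet_ballI θ r),
    ← Measure.restrict_congr_set Ioo_ae_eq_Icc,
    Measure.restrict_restrict (measurableSet_ballI θ r), ballI, inter_assoc,
    inter_eq_self_of_subset_right Ioo_subset_Icc_self]

lemma muab_ballI_pos (α β : ℝ) {θ φ : ℝ} (hθ : θ ∈ Icc 0 π) (hφ : φ ∈ Icc 0 π) (hne : θ ≠ φ) :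
    0 < muab α β (ballI θ |θ - φ|) := by
  rw [muab_ballI_eq, setLIntegral_pos_iff (by fun_prop)]
  refine lt_of_lt_of_le ?_ (measure_mono (s := Ioo (min θ φ) (max θ φ)) fun x hx => ?_)
  · rw [Real.volume_Ioo, ENNReal.ofReal_pos, max_sub_min_eq_abs]
    exact abs_pos.2 (sub_ne_zero.2 hne.symm)
  · have hxπ : x ∈ Ioo 0 π :=
      ⟨(le_min hθ.1 hφ.1).trans_lt hx.1, hx.2.trans_le (max_le hθ.2 hφ.2)⟩
    have := sin_half_pos hxπ
    have := cos_half_pos hxπ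
    refine ⟨?_, ?_, hxπ⟩
    · exact (ENNReal.ofReal_pos.2 (by positivity)).ne'
    · have max_sub_min := max_sub_min_eq_abs θ φ
      rw [abs_sub_comm] at max_sub_min
      constructor <;>
        linarith [hx.1, hx.2, min_le_left θ φ, le_max_left θ φ]

lemma sin_half_rpow_le {x : ℝ} (hx : x ∈ Ioo 0 π) (a : ℝ) :
    sin (x / 2) ^ a ≤ π ^ |a| * x ^ a := by
  refine rpow_le_rpow_abs_mul_rpow (sin_half_pos hx) hx.1 ?_
    (le_pi_mul_sin_half (Ioo_subset_Icc_self hx)) a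
  calc sin (x / 2) ≤ x / 2 := sin_le (by linarith [hx.1])
    _ ≤ π * x := by nlinarith [hx.1, pi_gt_three]

lemma cos_half_rpow_le {θ φ x : ℝ} (hθ : θ ∈ Icc 0 π) (hφ : φ ∈ Icc 0 π) (hne : θ ≠ φ)
    (hx : x ∈ Ioc 0 (π / 2)) (hxθ : θ - |θ - φ| < x) (b : ℝ) :
    cos (x / 2) ^ b ≤ (2 * π) ^ |b| * cosSum θ φ ^ b := by
  have hxπ : x ∈ Ioo 0 π := ⟨hx.1, hx.2.trans_lt (half_lt_self pi_pos)⟩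
  refine rpow_le_rpow_abs_mul_rpow (cos_half_pos hxπ) (cosSum_pos hθ hφ hne) ?_ ?_ b
  · have comparable := add_abs_sub_le_two_pi_mul_sinSum (pi_sub_mem_Icc hθ) (pi_sub_mem_Icc hφ)
    rw [sinSum_pi_sub, abs_pi_sub_sub_pi_sub] at comparable
    have cos_le : cos (x / 2) ≤ (π - x) / 2 := by
      rw [← sin_half_pi_sub]
      exact sin_le (by linarith [hxπ.2])
    linarith [hxπ.2]
  · have le_cos : π - x ≤ π * cos (x / 2) := by
      rw [← sin_half_pi_sub]
      exact le_pi_mul_sin_half (pi_sub_mem_Icc (Ioo_subset_Icc_self hxπ))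
    linarith [cosSum_le_two θ φ, hx.2, pi_gt_three]

lemma exists_setLIntegral_left_half_le {a : ℝ} (ha : -1 < a) (b : ℝ) :
    ∃ C : ℝ, 0 < C ∧ ∀ θ ∈ Icc 0 π, ∀ φ ∈ Icc 0 π, θ ≠ φ →
      ∫⁻ x in Ioo (θ - |θ - φ|) (θ + |θ - φ|) ∩ Ioc 0 (π / 2),
          ENNReal.ofReal (sin (x / 2) ^ a * cos (x / 2) ^ b) ≤
        ENNReal.ofReal (C * (|θ - φ| * sinSum θ φ ^ a * cosSum θ φ ^ b)) := by
  obtain ⟨A, hA, hint⟩ := exists_setLIntegral_Ioo_rpow_le ha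
  refine ⟨π ^ |a| * (2 * π) ^ |b| * A * (2 * π) ^ |a|, by positivity,
    fun θ hθ φ hφ hne => ?_⟩
  have hS := sinSum_pos hθ hφ hne
  have hT := cosSum_pos hθ hφ hne
  have hd : 0 < |θ - φ| := abs_pos.2 (sub_ne_zero.2 hne)
  have add_pos : 0 < θ + |θ - φ| := add_pos_of_nonneg_of_pos hθ.1 hd
  have add_rpow_le : (θ + |θ - φ|) ^ a ≤ (2 * π) ^ |a| * sinSum θ φ ^ a :=
    rpow_le_rpow_abs_mul_rpow add_pos hS (add_abs_sub_le_two_pi_mul_sinSum hθ hφ)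
      ((sinSum_le_add_abs_sub hθ hφ).trans
        (le_mul_of_one_le_left add_pos.le (by linarith [pi_gt_three]))) a
  set c := π ^ |a| * ((2 * π) ^ |b| * cosSum θ φ ^ b)
  have hc : 0 < c := by positivity
  calc _ ≤ ∫⁻ x in Ioo (θ - |θ - φ|) (θ + |θ - φ|) ∩ Ioc 0 (π / 2),
          ENNReal.ofReal c * ENNReal.ofReal (x ^ a) := by
        refine setLIntegral_mono' (measurableSet_Ioo.inter measurableSet_Ioc) fun x hx => ?_
        have hxπ : x ∈ Ioo 0 π := ⟨hx.2.1, hx.2.2.trans_lt (half_lt_self pi_pos)⟩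
        have hx0 := hxπ.1
        have := cos_half_pos hxπ
        rw [← ENNReal.ofReal_mul hc.le]
        apply ENNReal.ofReal_le_ofReal
        calc sin (x / 2) ^ a * cos (x / 2) ^ b
            ≤ π ^ |a| * x ^ a * ((2 * π) ^ |b| * cosSum θ φ ^ b) :=
              mul_le_mul (sin_half_rpow_le hxπ a) (cos_half_rpow_le hθ hφ hne hx.2 hx.1.1 b)
                (by positivity) (by positivity)
          _ = c * x ^ a := mul_right_comm _ _ _
    _ ≤ ENNReal.ofReal c * ENNReal.ofReal (A * |θ - φ| * (θ + |θ - φ|) ^ a) := by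
        rw [lintegral_const_mul' _ _ ENNReal.ofReal_ne_top]
        gcongr
        exact (lintegral_mono_set (inter_subset_inter_right _ fun x hx => hx.1)).trans
          (hint θ _ hθ.1 hd)
    _ ≤ ENNReal.ofReal (c * (A * |θ - φ| * ((2 * π) ^ |a| * sinSum θ φ ^ a))) := by
        rw [← ENNReal.ofReal_mul hc.le]
        gcongr
    _ = _ := by congr 1; ring

lemma Ioo_inter_Ioo_zero_pi_subset (θ d : ℝ) :
    Ioo (θ - d) (θ + d) ∩ Ioo 0 π ⊆ (Ioo (θ - d) (θ + d) ∩ Ioc 0 (π / 2)) ∪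
      (fun x => π - x) ⁻¹' (Ioo (π - θ - d) (π - θ + d) ∩ Ioc 0 (π / 2)) := by
  intro x ⟨hxθ, hxπ⟩
  rcases le_total x (π / 2) with hx | hx
  · exact Or.inl ⟨hxθ, hxπ.1, hx⟩
  · exact Or.inr ⟨⟨by linarith [hxθ.2], by linarith [hxθ.1]⟩, sub_pos.2 hxπ.2, by linarith⟩

lemma exists_muab_ballI_le {α β : ℝ} (hα : -1 < α) (hβ : -1 < β) :
    ∃ C : ℝ, 0 < C ∧ ∀ θ ∈ Icc 0 π, ∀ φ ∈ Icc 0 π, θ ≠ φ →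
      muab α β (ballI θ |θ - φ|) ≤ ENNReal.ofReal
        (C * (|θ - φ| * sinSum θ φ ^ (2 * α + 1) * cosSum θ φ ^ (2 * β + 1))) := by
  obtain ⟨A, hA, left_le⟩ :=
    exists_setLIntegral_left_half_le (by linarith : -1 < 2 * α + 1) (2 * β + 1)
  obtain ⟨B, hB, right_le⟩ :=
    exists_setLIntegral_left_half_le (by linarith : -1 < 2 * β + 1) (2 * α + 1)
  refine ⟨A + B, by positivity, fun θ hθ φ hφ hne => ?_⟩
  have := sinSum_pos hθ hφ hne
  have := cosSum_pos hθ hφ hne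
  specialize right_le (π - θ) (pi_sub_mem_Icc hθ) (π - φ) (pi_sub_mem_Icc hφ)
    (sub_right_injective.ne hne)
  rw [abs_pi_sub_sub_pi_sub, sinSum_pi_sub, cosSum_pi_sub, ← setLIntegral_preimage_sub_left π]
    at right_le
  simp only [sin_half_pi_sub, cos_half_pi_sub] at right_le
  rw [muab_ballI_eq]
  calc _ ≤ _ := lintegral_mono_set (Ioo_inter_Ioo_zero_pi_subset θ |θ - φ|)
    _ ≤ _ := lintegral_union_le _ _ _
    _ ≤ ENNReal.ofReal (A * (|θ - φ| * sinSum θ φ ^ (2 * α + 1) * cosSum θ φ ^ (2 * β + 1))) +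
          ENNReal.ofReal (B * (|θ - φ| * cosSum θ φ ^ (2 * β + 1) * sinSum θ φ ^ (2 * α + 1))) :=
        add_le_add (left_le θ hθ φ hφ hne) (by simpa only [mul_comm] using right_le)
    _ = _ := by
        rw [← ENNReal.ofReal_add (by positivity) (by positivity)]
        congr 1
        ring

lemma exists_rpow_le_div_muab_ballI {α β s x y z : ℝ} (hα : -1 < α) (hβ : -1 < β)
    (hx : 0 ≤ 1 + s + x) (hy : 0 ≤ 1 + s + x + y + (2 * α + 1))
    (hz : 0 ≤ 1 + s + x + z + (2 * β + 1)) :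
    ∃ C : ℝ, 0 < C ∧ ∀ θ ∈ Icc 0 π, ∀ φ ∈ Icc 0 π, θ ≠ φ →
      |θ - φ| ^ x * sinSum θ φ ^ y * cosSum θ φ ^ z ≤
        C * |θ - φ| ^ (-s) / (muab α β (ballI θ |θ - φ|)).toReal := by
  obtain ⟨A, hA, muab_le⟩ := exists_muab_ballI_le hα hβ
  set y' := y + (2 * α + 1)
  set z' := z + (2 * β + 1)
  set B : ℝ := max (π ^ (1 + s + x) * 2 ^ (1 + s + x + y') * 2 ^ |z'|)
    (π ^ (1 + s + x) * 2 ^ (1 + s + x + z') * 2 ^ |y'|)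
  have : 0 < B := by positivity
  refine ⟨A * B, by positivity, fun θ hθ φ hφ hne => ?_⟩
  have hd : 0 < |θ - φ| := abs_pos.2 (sub_ne_zero.2 hne)
  have hS := sinSum_pos hθ hφ hne
  have hT := cosSum_pos hθ hφ hne
  have hdS := abs_sub_le_pi_mul_sinSum hθ hφ
  have hdT := abs_sub_le_pi_mul_cosSum hθ hφ
  have powers_le : |θ - φ| ^ (1 + s + x) * sinSum θ φ ^ y' * cosSum θ φ ^ z' ≤ B := by
    rcases half_le_sinSum_or_half_le_cosSum hθ hφ with half_le_sin | half_le_cos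
    · rw [mul_right_comm]
      exact (rpow_mul_rpow_mul_rpow_le hx (by linarith) hd.le hT hdT (cosSum_le_two θ φ)
        half_le_sin (sinSum_le_two θ φ)).trans (le_max_right _ _)
    · exact (rpow_mul_rpow_mul_rpow_le hx (by linarith) hd.le hS hdS (sinSum_le_two θ φ)
        half_le_cos (cosSum_le_two θ φ)).trans (le_max_left _ _)
  have hμ := muab_le θ hθ φ hφ hne
  have toReal_pos : 0 < (muab α β (ballI θ |θ - φ|)).toReal :=
    ENNReal.toReal_pos (muab_ballI_pos α β hθ hφ hne).ne' (hμ.trans_lt ENNReal.ofReal_lt_top).ne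
  rw [le_div_iff₀ toReal_pos]
  calc _ ≤ |θ - φ| ^ x * sinSum θ φ ^ y * cosSum θ φ ^ z *
          (A * (|θ - φ| * sinSum θ φ ^ (2 * α + 1) * cosSum θ φ ^ (2 * β + 1))) := by
        gcongr
        exact ENNReal.toReal_le_of_le_ofReal (by positivity) hμ
    _ = A * (|θ - φ| ^ (1 + s + x) * sinSum θ φ ^ y' * cosSum θ φ ^ z') * |θ - φ| ^ (-s) := by
        rw [show 1 + s + x = x + 1 - -s by ring, Real.rpow_sub hd, Real.rpow_add_one hd.ne',
          show sinSum θ φ ^ y' = _ from Real.rpow_add hS _ _,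
          show cosSum θ φ ^ z' = _ from Real.rpow_add hT _ _]
        field_simp
    _ ≤ A * B * |θ - φ| ^ (-s) := by gcongr

end Ball

section PowMeas

/-- The measure `t ^ (W - 1) dt` on `(0, 1)`. -/
noncomputable def powMeas (W : ℝ) : Measure ℝ :=
  (volume.restrict (Ioo (0 : ℝ) 1)).withDensity (fun t => ENNReal.ofReal (t ^ (W - 1)))

lemma ae_powMeas_mem_Ioo (W : ℝ) : ∀ᵐ t ∂(powMeas W), t ∈ Ioo (0 : ℝ) 1 :=
  (withDensity_absolutelyContinuous _ _).ae_le (ae_restrict_mem measurableSet_Ioo)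

lemma isFiniteMeasure_powMeas {W : ℝ} (hW : 0 < W) : IsFiniteMeasure (powMeas W) := by
  refine isFiniteMeasure_withDensity ?_
  rw [Measure.restrict_congr_set Ioo_ae_eq_Ioc, lintegral_Ioc_zero_rpow (by linarith) zero_le_one]
  exact ENNReal.ofReal_ne_top

lemma sq_add_sq_rpow_rpow_le {H P t d : ℝ} (hH : 0 ≤ H) (hP : 0 ≤ P) (hd : 0 < d) :
    ((t ^ 2 + d ^ 2) ^ (-H)) ^ P ≤ max d t ^ (-(2 * (H * P))) := by
  have hmax : 0 < max d t := lt_max_of_lt_left hd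
  have max_sq_le : max d t ^ 2 ≤ t ^ 2 + d ^ 2 := by
    rcases le_total d t with h | h
    · rw [max_eq_right h]; exact le_add_of_nonneg_right (sq_nonneg d)
    · rw [max_eq_left h]; exact le_add_of_nonneg_left (sq_nonneg t)
  rw [← mul_neg, ← sq_rpow hmax.le, ← neg_mul, ← Real.rpow_mul (by positivity)]
  exact Real.rpow_le_rpow_of_nonpos (by positivity) max_sq_le
    (mul_nonpos_of_nonpos_of_nonneg (neg_nonpos.2 hH) hP)

lemma exists_lintegral_powMeas_le {H P W : ℝ} (hW : 0 < W) (hP : 0 < P) (hH : W < 2 * (H * P)) :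
    ∃ C : ℝ, 0 < C ∧ ∀ d : ℝ, 0 < d →
      ∫⁻ t, ‖(t ^ 2 + d ^ 2) ^ (-H)‖ₑ ^ P ∂(powMeas W) ≤
        ENNReal.ofReal (C * d ^ (W - 2 * (H * P))) := by
  have : 0 < 2 * (H * P) - W := sub_pos.2 hH
  have hH0 : 0 ≤ H := by
    by_contra! hneg
    nlinarith
  refine ⟨1 / W + 1 / (2 * (H * P) - W), by positivity, fun d hd => ?_⟩
  calc _ ≤ _ := lintegral_withDensity_le_lintegral_mul _ (by fun_prop) _
    _ ≤ ∫⁻ t in Ioi (0 : ℝ), ENNReal.ofReal (max d t ^ (-(2 * (H * P))) * t ^ (W - 1)) := by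
        refine (setLIntegral_mono' (measurableSet_Ioo (α := ℝ)) fun t ht => ?_).trans
          (lintegral_mono_set fun t ht => ht.1)
        have ht0 := ht.1
        rw [Pi.mul_apply, Real.enorm_of_nonneg (by positivity),
          ENNReal.ofReal_rpow_of_nonneg (by positivity) hP.le, mul_comm,
          ← ENNReal.ofReal_mul (by positivity)]
        gcongr
        exact sq_add_sq_rpow_rpow_le hH0 hP.le hd
    _ = _ := lintegral_Ioi_max_rpow_mul_rpow hW hH hd

lemma exists_eLpNorm_powMeas_le {G W : ℝ} (hG : 0 < G) (hW : 0 < W) {p : ℝ≥0∞} (hp : p ≠ 0) :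
    ∃ C : ℝ, 0 < C ∧ ∀ d : ℝ, 0 < d →
      eLpNorm (fun t : ℝ => (t ^ 2 + d ^ 2) ^ (-(G + W / (2 * p.toReal)))) p (powMeas W) ≤
        ENNReal.ofReal (C * d ^ (-(2 * G))) := by
  rcases eq_or_ne p ⊤ with rfl | htop
  · refine ⟨1, one_pos, fun d hd => eLpNormEssSup_le_of_ae_bound (.of_forall fun t => ?_)⟩
    rw [Real.norm_of_nonneg (by positivity), ENNReal.toReal_top, mul_zero, div_zero, add_zero,
      one_mul, ← mul_neg, ← sq_rpow hd.le]
    exact Real.rpow_le_rpow_of_nonpos (by positivity) (le_add_of_nonneg_left (sq_nonneg t))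
      (neg_nonpos.2 hG.le)
  · have hP : 0 < p.toReal := ENNReal.toReal_pos hp htop
    have exponent_eq : 2 * ((G + W / (2 * p.toReal)) * p.toReal) = 2 * G * p.toReal + W := by
      field_simp
    obtain ⟨C, hC, hint⟩ := exists_lintegral_powMeas_le hW hP
      (by rw [exponent_eq]; exact lt_add_of_pos_left W (by positivity))
    rw [exponent_eq] at hint
    refine ⟨C ^ (1 / p.toReal), by positivity, fun d hd => ?_⟩
    rw [eLpNorm_eq_lintegral_rpow_enorm_toReal hp htop]
    calc _ ≤ ENNReal.ofReal (C * d ^ (W - (2 * G * p.toReal + W))) ^ (1 / p.toReal) :=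
          ENNReal.rpow_le_rpow (hint d hd) (by positivity)
      _ = _ := by
          rw [ENNReal.ofReal_rpow_of_nonneg (by positivity) (by positivity),
            Real.mul_rpow hC.le (by positivity), ← Real.rpow_mul hd.le]
          congr 3
          field_simp
          ring

lemma exists_eLpNorm_const_add_le {Ω E : Type*} [MeasurableSpace Ω] [NormedAddCommGroup E]
    {μ : Measure Ω} [IsFiniteMeasure μ] (c : E) (p : ℝ≥0∞) :
    ∃ C : ℝ, 0 < C ∧ ∀ (f : Ω → E) (g : Ω → ℝ), AEStronglyMeasurable g μ →
      (∀ᵐ x ∂μ, ‖f x‖ ≤ g x) →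
        eLpNorm (fun x => c + f x) p μ ≤ ENNReal.ofReal C * (1 + eLpNorm g p μ) := by
  set L := ENNReal.LpAddConst p
  set N := eLpNorm (fun _ : Ω => ‖c‖) p μ
  have hL : L ≠ ⊤ := (ENNReal.LpAddConst_lt_top p).ne
  have hN : N ≠ ⊤ := (memLp_const ‖c‖).eLpNorm_ne_top
  refine ⟨(L * (1 + N)).toReal + 1, by positivity, fun f g hg hfg => ?_⟩
  calc _ ≤ eLpNorm ((fun _ => ‖c‖) + g) p μ :=
        eLpNorm_mono_ae_real (hfg.mono fun x hx => (norm_add_le _ _).trans (add_le_add le_rfl hx))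
    _ ≤ L * (N + eLpNorm g p μ) := eLpNorm_add_le' aestronglyMeasurable_const hg p
    _ ≤ L * (1 + N) * (1 + eLpNorm g p μ) := by
        rw [mul_assoc]
        gcongr L * ?_
        calc N + eLpNorm g p μ ≤ N + eLpNorm g p μ + (1 + N * eLpNorm g p μ) := le_self_add
          _ = (1 + N) * (1 + eLpNorm g p μ) := by ring
    _ ≤ _ := by
        gcongr
        refine (ENNReal.le_ofReal_iff_toReal_le ?_ (by positivity)).2 (lt_add_one _).le
        exact ENNReal.mul_ne_top hL (ENNReal.add_ne_top.2 ⟨ENNReal.one_ne_top, hN⟩)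

lemma exists_eLpNorm_one_add_powMeas_le {G W : ℝ} (hG : 0 < G) (hW : 0 < W) {p : ℝ≥0∞}
    (hp : p ≠ 0) :
    ∃ C : ℝ, 0 < C ∧ ∀ (A d : ℝ) (f : ℝ → ℝ), 0 ≤ A → 0 < d →
      (∀ t ∈ Ioo (0 : ℝ) 1, ‖f t‖ ≤ A * (t ^ 2 + d ^ 2) ^ (-(G + W / (2 * p.toReal)))) →
      eLpNorm (fun t => 1 + f t) p (powMeas W) ≤ ENNReal.ofReal (C * (1 + A * d ^ (-(2 * G)))) := by
  have := isFiniteMeasure_powMeas hW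
  obtain ⟨C₁, hC₁, eLpNorm_le⟩ := exists_eLpNorm_powMeas_le hG hW hp
  obtain ⟨C₂, hC₂, one_add_le⟩ := exists_eLpNorm_const_add_le (μ := powMeas W) (1 : ℝ) p
  refine ⟨C₂ * (1 + C₁), by positivity, fun A d f hA hd hf => ?_⟩
  set g : ℝ → ℝ := fun t => (t ^ 2 + d ^ 2) ^ (-(G + W / (2 * p.toReal)))
  have hg : Measurable g := by fun_prop
  calc _ ≤ ENNReal.ofReal C₂ * (1 + eLpNorm (A • g) p (powMeas W)) :=
        one_add_le f (A • g) (hg.const_smul A).aestronglyMeasurable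
          ((ae_powMeas_mem_Ioo W).mono hf)
    _ ≤ ENNReal.ofReal C₂ * (1 + ENNReal.ofReal A * ENNReal.ofReal (C₁ * d ^ (-(2 * G)))) := by
        rw [eLpNorm_const_smul, Real.enorm_of_nonneg hA]
        gcongr
        exact eLpNorm_le d hd
    _ = ENNReal.ofReal (C₂ * (1 + C₁ * (A * d ^ (-(2 * G))))) := by
        rw [← ENNReal.ofReal_mul hA, ← ENNReal.ofReal_one,
          ← ENNReal.ofReal_add zero_le_one (by positivity), ← ENNReal.ofReal_mul hC₂.le,
          mul_left_comm]
    _ ≤ _ := by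
        have : 0 ≤ A * d ^ (-(2 * G)) := by positivity
        rw [mul_assoc C₂]
        gcongr
        linarith

end PowMeas

lemma exists_admissible_exponent {s x y : ℝ} (hs : 0 ≤ s) (hx : -(1 / 2) < x)
    (hy : -(1 / 2) < y) :
    ∃ G : ℝ, 0 < G ∧ 2 * G ≤ 1 + s ∧ 2 * (G + x⁺) ≤ 1 + s + 2 * x ∧
      2 * (G + y⁺) ≤ 1 + s + 2 * y ∧ (1 + s) / 2 + x + y ≤ G + x⁺ + y⁺ := by
  refine ⟨(1 + s) / 2 + min 0 (min x y), ?_⟩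
  rw [posPart_def, posPart_def]
  grind

lemma exists_norm_sinSum_pow_mul_le {ρ σ : Measure ℝ} {b b' E F : ℝ} (hρ : HasEdgeGain ρ b)
    (hσ : HasEdgeGain σ b') (hEF : E ≤ F) (hF : b + b' < F) (m n : ℕ) :
    ∃ C : ℝ, 0 < C ∧ ∀ θ ∈ Icc 0 π, ∀ φ ∈ Icc 0 π, θ ≠ φ → ∀ t : ℝ, t ^ 2 ≤ 1 →
      ‖sinSum θ φ ^ m * cosSum θ φ ^ n * ∫ v, ∫ u, (t ^ 2 + qf θ φ u v) ^ (-E) ∂ρ ∂σ‖ ≤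
        C * (sinSum θ φ ^ (m - 2 * b) * cosSum θ φ ^ (n - 2 * b')) *
          (t ^ 2 + |θ - φ| ^ 2) ^ (-(F - b - b')) := by
  obtain ⟨C, hC, integral_le⟩ := exists_norm_integral_qf_le hρ hσ hEF hF
  refine ⟨C, hC, fun θ hθ φ hφ hne t ht => ?_⟩
  have hS := sinSum_pos hθ hφ hne
  have hT := cosSum_pos hθ hφ hne
  rw [norm_mul, Real.norm_of_nonneg (by positivity)]
  calc _ ≤ _ := mul_le_mul_of_nonneg_left (integral_le θ hθ φ hφ hne t ht) (by positivity)
    _ = _ := by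
        rw [sub_eq_add_neg (m : ℝ), sub_eq_add_neg (n : ℝ), Real.rpow_add hS, Real.rpow_add hT,
          Real.rpow_natCast, Real.rpow_natCast]
        ring

lemma exists_eLpNorm_one_add_kernel_le {ρ σ : Measure ℝ} {b b' E G W : ℝ} {p : ℝ≥0∞}
    (hρ : HasEdgeGain ρ b) (hσ : HasEdgeGain σ b') (hG : 0 < G) (hW : 0 < W) (hp : p ≠ 0)
    (hE : E ≤ G + W / (2 * p.toReal) + b + b') (m n : ℕ) :
    ∃ C : ℝ, 0 < C ∧ ∀ θ ∈ Icc 0 π, ∀ φ ∈ Icc 0 π, θ ≠ φ →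
      eLpNorm (fun t : ℝ => 1 + sinSum θ φ ^ m * cosSum θ φ ^ n *
          ∫ v, ∫ u, (t ^ 2 + qf θ φ u v) ^ (-E) ∂ρ ∂σ) p (powMeas W) ≤
        ENNReal.ofReal (C * (1 + |θ - φ| ^ (-(2 * G)) * sinSum θ φ ^ (m - 2 * b) *
          cosSum θ φ ^ (n - 2 * b'))) := by
  have : 0 ≤ W / (2 * p.toReal) := by positivity
  obtain ⟨A, hA, kernel_le⟩ := exists_norm_sinSum_pow_mul_le hρ hσ hE (by linarith) m n
  rw [show G + W / (2 * p.toReal) + b + b' - b - b' = G + W / (2 * p.toReal) by ring]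
    at kernel_le
  obtain ⟨B, hB, eLpNorm_le⟩ := exists_eLpNorm_one_add_powMeas_le hG hW hp
  refine ⟨B * (1 + A), by positivity, fun θ hθ φ hφ hne => ?_⟩
  have := sinSum_pos hθ hφ hne
  have := cosSum_pos hθ hφ hne
  set X := sinSum θ φ ^ (m - 2 * b) * cosSum θ φ ^ (n - 2 * b')
  set Y := |θ - φ| ^ (-(2 * G))
  have : 0 ≤ Y * X := by positivity
  calc _ ≤ ENNReal.ofReal (B * (1 + A * X * Y)) :=
        eLpNorm_le (A * X) |θ - φ| _ (by positivity) (abs_pos.2 (sub_ne_zero.2 hne)) fun t ht =>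
          kernel_le θ hθ φ hφ hne t (pow_le_one₀ ht.1.le ht.2.le)
    _ = ENNReal.ofReal (B * (1 + A * (Y * X))) := by rw [mul_assoc A, mul_comm X]
    _ ≤ ENNReal.ofReal (B * (1 + A) * (1 + Y * X)) := by
        rw [mul_assoc B]
        gcongr
        linarith
    _ = _ := by rw [← mul_assoc Y]

theorem finbridge_low_both_general (α β : ℝ) (hα : -1 < α) (hβ : -1 < β)
    (K R k r : ℕ) (hK : K = 0 → α ≤ -(1 / 2)) (hR : R = 0 → β ≤ -(1 / 2))
    (hk : K * k ≤ 2) (hr : R * r ≤ 2)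
    (W s : ℝ) (hW : 0 < W) (hs : 0 ≤ s) (p : ℝ≥0∞) (hp : p ≠ 0) :
    ∃ C : ℝ, 0 < C ∧ ∀ θ ∈ Icc (0 : ℝ) π, ∀ φ ∈ Icc (0 : ℝ) π, θ ≠ φ →
      eLpNorm (fun t : ℝ =>
          1 + (Real.sin (θ/2) + Real.sin (φ/2)) ^ (K * k) *
            (Real.cos (θ/2) + Real.cos (φ/2)) ^ (R * r) *
            ∫ v, (∫ u,
                (t ^ 2 + qf θ φ u v) ^
                  (-(α + β + 3/2 + W / (2 * p.toReal) + (K * k : ℕ) / 2 + (R * r : ℕ) / 2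
                      + s / 2))
              ∂(piAux α K)) ∂(piAux β R)) p
          ((volume.restrict (Ioo (0 : ℝ) 1)).withDensity
            (fun t => ENNReal.ofReal (t ^ (W - 1))))
        ≤ ENNReal.ofReal
            (C * |θ - φ| ^ (-s) / (muab α β (ballI θ |θ - φ|)).toReal) := by
  set x : ℝ := α + 1 / 2 + (K * k : ℕ) / 2 with x_def
  set y : ℝ := β + 1 / 2 + (R * r : ℕ) / 2 with y_def
  have neg_half_lt_x : -(1 / 2) < x := by linarith [Nat.cast_nonneg (α := ℝ) (K * k)]
  have neg_half_lt_y : -(1 / 2) < y := by linarith [Nat.cast_nonneg (α := ℝ) (R * r)]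
  obtain ⟨G, hG, hGs, hGx, hGy, hGxy⟩ := exists_admissible_exponent hs neg_half_lt_x neg_half_lt_y
  obtain ⟨A, hA, eLpNorm_le⟩ := exists_eLpNorm_one_add_kernel_le
    (E := α + β + 3 / 2 + W / (2 * p.toReal) + (K * k : ℕ) / 2 + (R * r : ℕ) / 2 + s / 2)
    (hasEdgeGain_piAux hα hK hk) (hasEdgeGain_piAux hβ hR hr) hG hW hp (by linarith)
    (K * k) (R * r)
  obtain ⟨B, hB, one_le⟩ := exists_rpow_le_div_muab_ballI (s := s) (x := 0) (y := 0) (z := 0)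
    hα hβ (by linarith) (by linarith) (by linarith)
  obtain ⟨C, hC, powers_le⟩ := exists_rpow_le_div_muab_ballI (s := s) (x := -(2 * G))
    (y := (K * k : ℕ) - 2 * x⁺) (z := (R * r : ℕ) - 2 * y⁺)
    hα hβ (by linarith) (by linarith) (by linarith)
  refine ⟨A * (B + C), by positivity, fun θ hθ φ hφ hne => (eLpNorm_le θ hθ φ hφ hne).trans
    (ENNReal.ofReal_le_ofReal ?_)⟩
  specialize one_le θ hθ φ hφ hne
  specialize powers_le θ hθ φ hφ hne
  simp only [Real.rpow_zero, mul_one] at one_le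
  calc _ ≤ _ := mul_le_mul_of_nonneg_left (add_le_add one_le powers_le) hA.le
    _ = _ := by ring

theorem finbridge_low_both (α β : ℝ) (hα₁ : -1 < α) (hα₂ : α < -(1/2))
    (hβ₁ : -1 < β) (hβ₂ : β < -(1/2))
    (K R k r : ℕ) (hK : K ≤ 1) (hR : R ≤ 1) (hk : k ≤ 2) (hr : r ≤ 2)
    (W s : ℝ) (hW : 1 ≤ W) (hs : 0 ≤ s) (p : ℝ≥0∞) (hp : 1 ≤ p) :
    ∃ C : ℝ, 0 < C ∧ ∀ θ ∈ Icc (0 : ℝ) π, ∀ φ ∈ Icc (0 : ℝ) π, θ ≠ φ →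
      eLpNorm (fun t : ℝ =>
          1 + (Real.sin (θ/2) + Real.sin (φ/2)) ^ (K * k) *
            (Real.cos (θ/2) + Real.cos (φ/2)) ^ (R * r) *
            ∫ v, (∫ u,
                (t ^ 2 + qf θ φ u v) ^
                  (-(α + β + 3/2 + W / (2 * p.toReal) + (K * k : ℕ) / 2 + (R * r : ℕ) / 2
                      + s / 2))
              ∂(piAux α K)) ∂(piAux β R)) p
          ((volume.restrict (Ioo (0 : ℝ) 1)).withDensity
            (fun t => ENNReal.ofReal (t ^ (W - 1))))
        ≤ ENNReal.ofReal
            (C * |θ - φ| ^ (-s) / (muab α β (ballI θ |θ - φ|)).toReal) :=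
  finbridge_low_both_general α β hα₁ hβ₁ K R k r (fun _ => hα₂.le) (fun _ => hβ₂.le)
    (Nat.mul_le_mul hK hk) (Nat.mul_le_mul hR hr) W s (one_pos.trans_le hW) hs p
    (one_pos.trans_le hp).ne'
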